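/- arXiv:2309.16616 — 4 statements merged into one kernel-verified Lean document; each statement's English description precedes it below -/
import Mathlib

section
/- Let r > 1 be an integer, A an atomic domain, and S ⊆ A a saturated multiplicative set such that every nonunit element of S is a finite product of r-good atoms of A. If the localization A_S of A at S is an r-congruence half-factorial domain, then A is an r-congruence half-factorial domain. -/
/-!
The idea is to compare every factorization in `A` with factorizations into *tame* atoms: atoms that
are `r`-good, or that stay irreducible in the localization `A_S`.

* Two products of tame atoms that are associated have congruent numbers of factors
  (`card_modEq_of_tame`). Such a relation splits into irredundant ones; an irredundant relation
  containing an `r`-good atom is balanced by definition, and one containing none is a relation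
  between atoms of `A_S`, hence balanced because `A_S` is an `r`-CHFD.
* Every atom `a` fits into a *balanced* relation `a · w₁ ⋯ wₚ ~ x₁ ⋯ x_q` with the `wᵢ` good and
  the `xⱼ` tame (`exists_balanced_tame`). An atom of `A_S` comes, up to a unit of `A_S`, from a tame
  atom of `A`, so factoring `a` in `A_S` and clearing denominators gives a relation of this shape.
  When the number of `wᵢ` is as small as possible, either `p = 0`, and then `q = 1` since `a` is an
  atom, or the relation is irredundant and contains the good atom `w₁`; it is balanced both times.

Multiplying the relations of the second point over the factors of `s` and of `t` gives
`s · W ~ X` and `t · W' ~ X'`, both balanced. If `s` and `t` have equal products, then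
`X · W' ~ X' · W` is a relation between tame atoms, hence balanced, and so `|s| ≡ |t|` modulo `r`.
-/

/-- An *atomic equality* `a₁⋯aₙ = b₁⋯bₘ` (n, m ≥ 1), encoded by two nonempty
multisets of irreducible elements with equal products. -/
def IsAtomicEquality {A : Type*} [CommRing A] (s t : Multiset A) : Prop :=
  s ≠ 0 ∧ t ≠ 0 ∧ (∀ a ∈ s, Irreducible a) ∧ (∀ b ∈ t, Irreducible b) ∧ s.prod = t.prod

/-- The atomic equality given by `s` and `t` is *irredundant* if no product of a
nonempty proper sub-multiset of `s` is associated to a product of a nonempty proper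
sub-multiset of `t`. -/
def IsIrredundant {A : Type*} [CommRing A] (s t : Multiset A) : Prop :=
  ∀ u v : Multiset A, u ≤ s → v ≤ t → u ≠ 0 → v ≠ 0 → u ≠ s → v ≠ t →
    ¬ Associated u.prod v.prod

/-- A *bad atom* is an irreducible element appearing in some irredundant unbalanced
atomic equality. -/
def IsBadAtom {A : Type*} [CommRing A] (x : A) : Prop :=
  Irreducible x ∧ ∃ s t : Multiset A, IsAtomicEquality s t ∧ IsIrredundant s t ∧
    Multiset.card s ≠ Multiset.card t ∧ (x ∈ s ∨ x ∈ t)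

/-- A *good atom* is an irreducible element that is not a bad atom. -/
def IsGoodAtom {A : Type*} [CommRing A] (x : A) : Prop :=
  Irreducible x ∧ ¬ IsBadAtom x

/-- A ring is *atomic* if every nonzero nonunit is a finite product of irreducible
elements. -/
def IsAtomicDomain (A : Type*) [CommRing A] : Prop :=
  ∀ x : A, x ≠ 0 → ¬ IsUnit x → ∃ s : Multiset A, (∀ a ∈ s, Irreducible a) ∧ s.prod = x

/-- An *HF-element*: all its factorizations into irreducible elements have the same
number of factors. -/
def IsHFElement {A : Type*} [CommRing A] (x : A) : Prop :=
  ∀ s t : Multiset A, (∀ a ∈ s, Irreducible a) → (∀ b ∈ t, Irreducible b) →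
    s.prod = x → t.prod = x → Multiset.card s = Multiset.card t

/-- A *half-factorial domain*: an atomic domain in which every nonzero nonunit is an
HF-element. -/
def IsHFD (A : Type*) [CommRing A] : Prop :=
  IsAtomicDomain A ∧ ∀ x : A, x ≠ 0 → ¬ IsUnit x → IsHFElement x

/-- An *r-bad atom* is an irreducible element appearing in some irredundant
r-unbalanced atomic equality, i.e. one whose two sides have numbers of factors that
are not congruent modulo `r`. -/
def IsRBadAtom {A : Type*} [CommRing A] (r : ℕ) (x : A) : Prop :=
  Irreducible x ∧ ∃ s t : Multiset A, IsAtomicEquality s t ∧ IsIrredundant s t ∧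
    ¬ (Multiset.card s ≡ Multiset.card t [MOD r]) ∧ (x ∈ s ∨ x ∈ t)

/-- An *r-good atom* is an irreducible element that is not an r-bad atom. -/
def IsRGoodAtom {A : Type*} [CommRing A] (r : ℕ) (x : A) : Prop :=
  Irreducible x ∧ ¬ IsRBadAtom r x

/-- An *r-congruence half-factorial domain (r-CHFD)*: an atomic domain in which, for
every nonzero nonunit `x`, the numbers of factors in all atomic factorizations of `x`
are congruent modulo `r`. -/
def IsRCHFD (A : Type*) [CommRing A] (r : ℕ) : Prop :=
  IsAtomicDomain A ∧ ∀ x : A, x ≠ 0 → ¬ IsUnit x →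
    ∀ s t : Multiset A, (∀ a ∈ s, Irreducible a) → (∀ b ∈ t, Irreducible b) →
      s.prod = x → t.prod = x → Multiset.card s ≡ Multiset.card t [MOD r]

/-- An atom of `A` is *tame* (relative to `r` and a ring homomorphism `f : A → B`, in practice the
localization map) if it is `r`-good or its image in `B` is again an atom. -/
def IsTameAtom {A B : Type*} [CommRing A] [CommRing B] (f : A →+* B) (r : ℕ) (a : A) : Prop :=
  IsRGoodAtom r a ∨ (Irreducible a ∧ Irreducible (f a))

/-! ### Relations between products of atoms -/

section Multisets

variable {A : Type*} [CommRing A]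

lemma exists_mem_associated_of_irreducible_prod (m : Multiset A) (h : Irreducible m.prod) :
    ∃ c ∈ m, Associated c m.prod := by
  induction m using Multiset.induction_on with
  | empty => simp at h
  | cons c m ih =>
    rw [Multiset.prod_cons] at h ⊢
    rcases h.isUnit_or_isUnit rfl with hc | hm
    · have h2 : Associated m.prod (c * m.prod) := (associated_unit_mul_left _ _ hc).symm
      obtain ⟨d, hd, hd'⟩ := ih (h2.irreducible_iff.2 h)
      exact ⟨d, Multiset.mem_cons_of_mem hd, hd'.trans h2⟩
    · exact ⟨c, Multiset.mem_cons_self c m, (associated_mul_unit_left _ _ hm).symm⟩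

lemma eq_zero_of_isUnit_prod {s : Multiset A} (hs : ∀ a ∈ s, Irreducible a)
    (h : IsUnit s.prod) : s = 0 := by
  by_contra h0
  obtain ⟨a, ha⟩ := Multiset.exists_mem_of_ne_zero h0
  exact (hs a ha).not_isUnit (isUnit_of_dvd_unit (Multiset.dvd_prod ha) h)

lemma card_eq_one_of_irreducible_prod {s : Multiset A} (hs : ∀ a ∈ s, Irreducible a)
    (h : Irreducible s.prod) : Multiset.card s = 1 := by
  obtain ⟨c, hc, -⟩ := exists_mem_associated_of_irreducible_prod s h
  obtain ⟨s, rfl⟩ := Multiset.exists_cons_of_mem hc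
  rw [Multiset.prod_cons] at h
  rcases h.isUnit_or_isUnit rfl with hu | hu
  · exact absurd hu (hs c hc).not_isUnit
  · rw [eq_zero_of_isUnit_prod (fun a ha => hs a (Multiset.mem_cons_of_mem ha)) hu]
    simp

lemma IsIrredundant.symm {s t : Multiset A} (h : IsIrredundant s t) : IsIrredundant t s :=
  fun u v hu hv hu0 hv0 hus hvt ha => h v u hv hu hv0 hu0 hvt hus ha.symm

/-- In a relation between atoms that holds only up to a unit, the unit can be absorbed into one
factor of the right-hand side, and this preserves irredundancy. -/
lemma exists_prod_eq_of_associated {s t : Multiset A} (ht0 : t ≠ 0)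
    (ht : ∀ b ∈ t, Irreducible b) (h : Associated s.prod t.prod) :
    ∃ t' : Multiset A, t' ≠ 0 ∧ (∀ b ∈ t', Irreducible b) ∧ s.prod = t'.prod ∧
      Multiset.card t' = Multiset.card t ∧ (IsIrredundant s t → IsIrredundant s t') := by
  obtain ⟨y, hy⟩ := Multiset.exists_mem_of_ne_zero ht0
  obtain ⟨t, rfl⟩ := Multiset.exists_cons_of_mem hy
  obtain ⟨c, hc⟩ := h.symm
  have hyc : Associated (y * c) y := (associated_mul_unit_left y _ c.isUnit)
  refine ⟨(y * c) ::ₘ t, Multiset.cons_ne_zero, ?_, ?_, by simp, ?_⟩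
  · intro b hb
    rcases Multiset.mem_cons.1 hb with rfl | hb
    · exact hyc.irreducible_iff.2 (ht y hy)
    · exact ht b (Multiset.mem_cons_of_mem hb)
  · rw [← hc, Multiset.prod_cons, Multiset.prod_cons]
    ring
  · intro hirr u v hu hv hu0 hv0 hus hvt ha
    by_cases hvt' : v ≤ t
    · refine hirr u v hu (hvt'.trans (Multiset.le_cons_self t y)) hu0 hv0 hus ?_ ha
      rintro rfl
      have := Multiset.card_le_card hvt'
      simp at this
    · have hm : y * c ∈ v := by
        by_contra hm
        exact hvt' ((Multiset.le_cons_of_notMem hm).1 hv)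
      obtain ⟨v, rfl⟩ := Multiset.exists_cons_of_mem hm
      refine hirr u (y ::ₘ v) hu (Multiset.cons_le_cons y ((Multiset.cons_le_cons_iff _).1 hv))
        hu0 Multiset.cons_ne_zero hus ?_ ?_
      · intro h
        exact hvt (by rw [(Multiset.cons_inj_right y).1 h])
      · rw [Multiset.prod_cons] at ha ⊢
        exact ha.trans (hyc.mul_right _)

lemma card_modEq_of_good_mem {r : ℕ} {s t : Multiset A} (ht0 : t ≠ 0)
    (hs : ∀ a ∈ s, Irreducible a) (ht : ∀ b ∈ t, Irreducible b)
    (h : Associated s.prod t.prod) (hirr : IsIrredundant s t) {x : A} (hx : x ∈ s)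
    (hg : IsRGoodAtom r x) : Multiset.card s ≡ Multiset.card t [MOD r] := by
  obtain ⟨t', ht0', ht', he, hc, hi⟩ := exists_prod_eq_of_associated ht0 ht h
  rw [← hc]
  by_contra hb
  exact hg.2 ⟨hg.1, s, t', ⟨fun h => by simp [h] at hx, ht0', hs, ht', he⟩, hi hirr, hb, .inl hx⟩

/-- The complement of an associated pair of sub-products is again an associated pair. -/
lemma associated_prod_sub [IsDomain A] [DecidableEq A] {s t u v : Multiset A}
    (hs : ∀ a ∈ s, Irreducible a) (h : Associated s.prod t.prod) (hu : u ≤ s) (hv : v ≤ t)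
    (huv : Associated u.prod v.prod) : Associated (s - u).prod (t - v).prod := by
  rw [← add_tsub_cancel_of_le hu, ← add_tsub_cancel_of_le hv, Multiset.prod_add,
    Multiset.prod_add] at h
  refine h.of_mul_left huv ?_
  intro h0
  exact (hs 0 (Multiset.mem_of_le hu (Multiset.prod_eq_zero_iff.1 h0))).ne_zero rfl

end Multisets

/-! ### Tame atoms -/

section Tame

variable {A B : Type*} [CommRing A] [CommRing B] {f : A →+* B} {r : ℕ}

lemma IsTameAtom.irreducible {a : A} (h : IsTameAtom f r a) : Irreducible a :=
  h.elim (fun h => h.1) (fun h => h.1)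

lemma card_modEq_of_tame [IsDomain A] (hf : Function.Injective f) (hB : IsRCHFD B r)
    (s t : Multiset A) (hs : ∀ a ∈ s, IsTameAtom f r a) (ht : ∀ b ∈ t, IsTameAtom f r b)
    (h : Associated s.prod t.prod) : Multiset.card s ≡ Multiset.card t [MOD r] := by
  classical
  have hs' := fun a ha => (hs a ha).irreducible
  have ht' := fun a ha => (ht a ha).irreducible
  by_cases hs0 : s = 0
  · have : IsUnit t.prod := h.isUnit (by simp [hs0])
    rw [hs0, eq_zero_of_isUnit_prod ht' this]
  by_cases ht0 : t = 0
  · have : IsUnit s.prod := h.symm.isUnit (by simp [ht0])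
    rw [ht0, eq_zero_of_isUnit_prod hs' this]
  by_cases hirr : IsIrredundant s t
  · by_cases hsg : ∃ x ∈ s, IsRGoodAtom r x
    · obtain ⟨x, hx, hg⟩ := hsg
      exact card_modEq_of_good_mem ht0 hs' ht' h hirr hx hg
    by_cases htg : ∃ x ∈ t, IsRGoodAtom r x
    · obtain ⟨x, hx, hg⟩ := htg
      exact (card_modEq_of_good_mem hs0 ht' hs' h.symm hirr.symm hx hg).symm
    · -- no good atom occurs, so `f` maps the relation to one between atoms of `B`
      have hfs : ∀ b ∈ s.map f, Irreducible b := by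
        intro b hb
        obtain ⟨a, ha, rfl⟩ := Multiset.mem_map.1 hb
        exact ((hs a ha).resolve_left (fun hg => hsg ⟨a, ha, hg⟩)).2
      have hft : ∀ b ∈ t.map f, Irreducible b := by
        intro b hb
        obtain ⟨a, ha, rfl⟩ := Multiset.mem_map.1 hb
        exact ((ht a ha).resolve_left (fun hg => htg ⟨a, ha, hg⟩)).2
      have hfa : Associated (s.map f).prod (t.map f).prod := by
        rw [← map_multiset_prod, ← map_multiset_prod]
        exact h.map f
      obtain ⟨t', -, hti, he, hc, -⟩ :=
        exists_prod_eq_of_associated (by simpa using ht0) hft hfa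
      have key := hB.2 (s.map f).prod ?_ ?_ (s.map f) t' hfs hti rfl he.symm
      · rwa [hc, Multiset.card_map, Multiset.card_map] at key
      · rw [← map_multiset_prod, Ne, map_eq_zero_iff f hf, Multiset.prod_eq_zero_iff]
        exact fun h0 => (hs' 0 h0).ne_zero rfl
      · intro hu
        exact hs0 (by simpa using eq_zero_of_isUnit_prod hfs hu)
  · unfold IsIrredundant at hirr
    push Not at hirr
    obtain ⟨u, v, hu, hv, hu0, hv0, hus, hvt, huv⟩ := hirr
    have hlt : Multiset.card u < Multiset.card s :=
      Multiset.card_lt_card (lt_of_le_of_ne hu hus)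
    have hpos : 0 < Multiset.card u := Multiset.card_pos.2 hu0
    have hcs : Multiset.card (s - u) = Multiset.card s - Multiset.card u :=
      Multiset.card_sub hu
    have e1 := card_modEq_of_tame hf hB u v (fun a ha => hs a (Multiset.mem_of_le hu ha))
      (fun a ha => ht a (Multiset.mem_of_le hv ha)) huv
    have e2 := card_modEq_of_tame hf hB (s - u) (t - v)
      (fun a ha => hs a (Multiset.mem_of_le (Multiset.sub_le_self _ _) ha))
      (fun a ha => ht a (Multiset.mem_of_le (Multiset.sub_le_self _ _) ha))
      (associated_prod_sub hs' h hu hv huv)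
    have e3 := e1.add e2
    rwa [← Multiset.card_add, ← Multiset.card_add, add_tsub_cancel_of_le hu,
      add_tsub_cancel_of_le hv] at e3
termination_by Multiset.card s

/-- A relation `a · w₁ ⋯ wₚ ~ x₁ ⋯ x_q` with good `wᵢ` and tame `xⱼ` can be replaced by a balanced
one: a redundant relation contains a shorter one of the same shape, on the side of the splitting
that contains `a`. -/
lemma exists_balanced_of_relation [IsDomain A] {a : A} (ha : Irreducible a) (w x : Multiset A)
    (hw : ∀ b ∈ w, IsRGoodAtom r b) (hx : ∀ b ∈ x, IsTameAtom f r b)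
    (h : Associated (a ::ₘ w).prod x.prod) :
    ∃ w x : Multiset A, (∀ b ∈ w, IsRGoodAtom r b) ∧ (∀ b ∈ x, IsTameAtom f r b) ∧
      Associated (a * w.prod) x.prod ∧ 1 + Multiset.card w ≡ Multiset.card x [MOD r] := by
  classical
  have hx' := fun b hb => (hx b hb).irreducible
  have haw : ∀ b ∈ a ::ₘ w, Irreducible b := by
    intro b hb
    rcases Multiset.mem_cons.1 hb with rfl | hb
    · exact ha
    · exact (hw b hb).1
  have hx0 : x ≠ 0 := by
    rintro rfl
    exact Multiset.cons_ne_zero (eq_zero_of_isUnit_prod haw (h.symm.isUnit (by simp)))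
  by_cases hw0 : w = 0
  · subst hw0
    refine ⟨0, x, hw, hx, by simpa using h, ?_⟩
    rw [card_eq_one_of_irreducible_prod hx' (h.irreducible_iff.1 (by simpa using ha))]
    simp [Nat.ModEq]
  by_cases hirr : IsIrredundant (a ::ₘ w) x
  · obtain ⟨b, hb⟩ := Multiset.exists_mem_of_ne_zero hw0
    refine ⟨w, x, hw, hx, by simpa using h, ?_⟩
    have := card_modEq_of_good_mem hx0 haw hx' h hirr (Multiset.mem_cons_of_mem hb) (hw b hb)
    rwa [Multiset.card_cons, add_comm] at this
  · unfold IsIrredundant at hirr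
    push Not at hirr
    obtain ⟨u, v, hu, hv, hu0, hv0, hus, hvt, huv⟩ := hirr
    have hlt : Multiset.card u < Multiset.card (a ::ₘ w) :=
      Multiset.card_lt_card (lt_of_le_of_ne hu hus)
    have hcu := Multiset.card_sub hu
    have hpos : 0 < Multiset.card u := Multiset.card_pos.2 hu0
    obtain ⟨u, v, hu, hv, hmem, hlt, huv⟩ : ∃ u v : Multiset A, u ≤ a ::ₘ w ∧ v ≤ x ∧ a ∈ u ∧
        Multiset.card u < Multiset.card (a ::ₘ w) ∧ Associated u.prod v.prod := by
      by_cases hau : a ∈ u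
      · exact ⟨u, v, hu, hv, hau, hlt, huv⟩
      · refine ⟨a ::ₘ w - u, x - v, Multiset.sub_le_self _ _, Multiset.sub_le_self _ _, ?_,
          by omega, associated_prod_sub haw h hu hv huv⟩
        have hm : a ∈ u + (a ::ₘ w - u) := by
          rw [add_tsub_cancel_of_le hu]
          exact Multiset.mem_cons_self a w
        exact (Multiset.mem_add.1 hm).resolve_left hau
    obtain ⟨w', rfl⟩ := Multiset.exists_cons_of_mem hmem
    have hw' : w' ≤ w := (Multiset.cons_le_cons_iff _).1 hu
    have hdec : Multiset.card w' < Multiset.card w := by simpa using hlt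
    exact exists_balanced_of_relation ha w' v (fun b hb => hw b (Multiset.mem_of_le hw' hb))
      (fun b hb => hx b (Multiset.mem_of_le hv hb)) huv
termination_by Multiset.card w
decreasing_by exact hdec

end Tame

/-! ### Lifting factorizations from the localization -/

section Localization

variable {A : Type*} [CommRing A] {r : ℕ} {S : Submonoid A}

/-- Every atom of `A_S` is, up to a unit of `A_S`, the image of a tame atom of `A`. -/
lemma exists_tame_associated (hA : IsAtomicDomain A) {z : Localization S} (hz : Irreducible z) :
    ∃ y : A, IsTameAtom (algebraMap A (Localization S)) r y ∧
      Associated (algebraMap A (Localization S) y) z := by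
  obtain ⟨b, s, rfl⟩ := IsLocalization.exists_mk'_eq S z
  have hb : Associated (algebraMap A (Localization S) b) (IsLocalization.mk' _ b s) := by
    rw [← IsLocalization.mk'_spec (Localization S) b s]
    exact associated_mul_unit_left _ _ (IsLocalization.map_units _ s)
  have hbi := hb.irreducible_iff.2 hz
  obtain ⟨m, hm, rfl⟩ := hA b (fun h => hbi.ne_zero (by rw [h, map_zero]))
    (fun h => hbi.not_isUnit (h.map _))
  rw [map_multiset_prod] at hb hbi
  obtain ⟨c, hc, hc'⟩ := exists_mem_associated_of_irreducible_prod _ hbi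
  obtain ⟨y, hy, rfl⟩ := Multiset.mem_map.1 hc
  exact ⟨y, .inr ⟨hm y hy, hc'.irreducible_iff.2 hbi⟩, hc'.trans hb⟩

lemma exists_tame_prod_associated (hA : IsAtomicDomain A) (m : Multiset (Localization S))
    (hm : ∀ z ∈ m, Irreducible z) :
    ∃ x : Multiset A, (∀ b ∈ x, IsTameAtom (algebraMap A (Localization S)) r b) ∧
      Associated (algebraMap A (Localization S) x.prod) m.prod := by
  induction m using Multiset.induction_on with
  | empty => exact ⟨0, by simp, by simp⟩
  | cons z m ih =>
    obtain ⟨x, hx, hx'⟩ := ih (fun b hb => hm b (Multiset.mem_cons_of_mem hb))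
    obtain ⟨y, hy, hy'⟩ := exists_tame_associated (r := r) hA (hm z (Multiset.mem_cons_self z m))
    refine ⟨y ::ₘ x, ?_, ?_⟩
    · intro b hb
      rcases Multiset.mem_cons.1 hb with rfl | hb
      · exact hy
      · exact hx b hb
    · rw [Multiset.prod_cons, Multiset.prod_cons, map_mul]
      exact hy'.mul_mul hx'

lemma mem_of_isUnit_algebraMap (hS0 : S ≤ nonZeroDivisors A)
    (hsat : ∀ a b : A, a * b ∈ S → a ∈ S ∧ b ∈ S) {a : A}
    (h : IsUnit (algebraMap A (Localization S) a)) : a ∈ S := by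
  obtain ⟨z, hz⟩ := h.exists_right_inv
  obtain ⟨b, s, rfl⟩ := IsLocalization.exists_mk'_eq S z
  have h1 : algebraMap A (Localization S) (a * b) = algebraMap A (Localization S) s := by
    rw [map_mul, ← IsLocalization.mk'_spec (Localization S) b s, ← mul_assoc, hz, one_mul]
  have h2 : a * b = s := IsLocalization.injective (Localization S) hS0 h1
  exact (hsat a b (h2 ▸ s.2)).1

lemma exists_balanced_tame [IsDomain A] (hA : IsAtomicDomain A) (hS0 : S ≤ nonZeroDivisors A)
    (hsat : ∀ a b : A, a * b ∈ S → a ∈ S ∧ b ∈ S)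
    (hgood : ∀ s ∈ S, ¬ IsUnit s →
      ∃ m : Multiset A, (∀ a ∈ m, IsRGoodAtom r a) ∧ m.prod = s)
    (hloc : IsAtomicDomain (Localization S)) {a : A} (ha : Irreducible a) :
    ∃ w x : Multiset A, (∀ b ∈ w, IsRGoodAtom r b) ∧
      (∀ b ∈ x, IsTameAtom (algebraMap A (Localization S)) r b) ∧
      Associated (a * w.prod) x.prod ∧ 1 + Multiset.card w ≡ Multiset.card x [MOD r] := by
  have hgood' : ∀ s ∈ S, ∃ m : Multiset A, (∀ a ∈ m, IsRGoodAtom r a) ∧ Associated m.prod s := by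
    intro s hs
    by_cases hu : IsUnit s
    · exact ⟨0, by simp, by simpa using (associated_one_iff_isUnit.2 hu).symm⟩
    · obtain ⟨m, hm, rfl⟩ := hgood s hs hu
      exact ⟨m, hm, .refl _⟩
  by_cases haS : a ∈ S
  · obtain ⟨m, hm, rfl⟩ := hgood a haS ha.not_isUnit
    obtain ⟨c, hc, hc'⟩ := exists_mem_associated_of_irreducible_prod _ ha
    refine ⟨0, {c}, by simp, ?_, by simpa using hc'.symm, by simp [Nat.ModEq]⟩
    intro b hb
    rw [Multiset.mem_singleton.1 hb]
    exact .inl (hm c hc)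
  · have hne : algebraMap A (Localization S) a ≠ 0 := by
      rw [Ne, map_eq_zero_iff _ (IsLocalization.injective (Localization S) hS0)]
      exact ha.ne_zero
    obtain ⟨m, hm, hma⟩ := hloc _ hne (fun h => haS (mem_of_isUnit_algebraMap hS0 hsat h))
    obtain ⟨x, hx, hxm⟩ := exists_tame_prod_associated (r := r) hA m hm
    rw [hma] at hxm
    -- clear the denominator of the unit of `A_S` relating `a` to the product of `x`
    obtain ⟨⟨c, c', hcc, hcc'⟩, hc⟩ := hxm
    obtain ⟨t, s, rfl⟩ := IsLocalization.exists_mk'_eq S c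
    have ht : t ∈ S := by
      refine mem_of_isUnit_algebraMap hS0 hsat ?_
      rw [← IsLocalization.mk'_spec (Localization S) t s]
      exact (IsUnit.of_mul_eq_one _ hcc).mul (IsLocalization.map_units _ s)
    have he : a * s = t * x.prod := by
      apply IsLocalization.injective (Localization S) hS0
      rw [map_mul, map_mul, ← hc, ← IsLocalization.mk'_spec (Localization S) t s]
      ring
    obtain ⟨w, hw, hws⟩ := hgood' s s.2
    obtain ⟨u, hu, hut⟩ := hgood' t ht
    refine exists_balanced_of_relation ha w (u + x) hw ?_ ?_
    · intro b hb
      exact (Multiset.mem_add.1 hb).elim (fun h => .inl (hu b h)) (hx b)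
    · rw [Multiset.prod_cons, Multiset.prod_add]
      exact ((hws.mul_left a).trans (.of_eq he)).trans (hut.symm.mul_right _)

lemma exists_balanced_tame_prod [IsDomain A] (hA : IsAtomicDomain A) (hS0 : S ≤ nonZeroDivisors A)
    (hsat : ∀ a b : A, a * b ∈ S → a ∈ S ∧ b ∈ S)
    (hgood : ∀ s ∈ S, ¬ IsUnit s →
      ∃ m : Multiset A, (∀ a ∈ m, IsRGoodAtom r a) ∧ m.prod = s)
    (hloc : IsAtomicDomain (Localization S)) (s : Multiset A) (hs : ∀ a ∈ s, Irreducible a) :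
    ∃ w x : Multiset A, (∀ b ∈ w, IsRGoodAtom r b) ∧
      (∀ b ∈ x, IsTameAtom (algebraMap A (Localization S)) r b) ∧
      Associated (s.prod * w.prod) x.prod ∧
      Multiset.card s + Multiset.card w ≡ Multiset.card x [MOD r] := by
  induction s using Multiset.induction_on with
  | empty => exact ⟨0, 0, by simp, by simp, by simp, by simp [Nat.ModEq]⟩
  | cons a s ih =>
    obtain ⟨w, x, hw, hx, h, hc⟩ := ih (fun b hb => hs b (Multiset.mem_cons_of_mem hb))
    obtain ⟨w', x', hw', hx', h', hc'⟩ :=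
      exists_balanced_tame hA hS0 hsat hgood hloc (hs a (Multiset.mem_cons_self a s))
    refine ⟨w' + w, x' + x, ?_, ?_, ?_, ?_⟩
    · exact fun b hb => (Multiset.mem_add.1 hb).elim (hw' b) (hw b)
    · exact fun b hb => (Multiset.mem_add.1 hb).elim (hx' b) (hx b)
    · have := h'.mul_mul h
      rw [Multiset.prod_cons, Multiset.prod_add, Multiset.prod_add]
      have e : a * s.prod * (w'.prod * w.prod) = a * w'.prod * (s.prod * w.prod) := by ring
      rwa [e]
    · have := hc'.add hc
      rw [Multiset.card_cons, Multiset.card_add, Multiset.card_add]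
      have e : Multiset.card s + 1 + (Multiset.card w' + Multiset.card w) =
          1 + Multiset.card w' + (Multiset.card s + Multiset.card w) := by ring
      rwa [e]

end Localization

/-- **Theorem 13 (Nagata-type theorem for r-CHFDs).** Let `r > 1` be an integer,
`A` an atomic domain and `S ⊆ A` a saturated multiplicative set every nonunit
element of which is a finite product of r-good atoms. If the localization `A_S` is an
r-CHFD, then so is `A`. -/
theorem stmt_16 {A : Type*} [CommRing A] [IsDomain A] (r : ℕ) (hr : 1 < r)
    (hA : IsAtomicDomain A) (S : Submonoid A)
    (hsat : ∀ a b : A, a * b ∈ S → a ∈ S ∧ b ∈ S)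
    (hgood : ∀ s ∈ S, ¬ IsUnit s →
      ∃ m : Multiset A, (∀ a ∈ m, IsRGoodAtom r a) ∧ m.prod = s)
    (hloc : IsRCHFD (Localization S) r) :
    IsRCHFD A r := by
  have hS0 : S ≤ nonZeroDivisors A := by
    intro s hs
    rw [mem_nonZeroDivisors_iff_ne_zero]
    rintro rfl
    -- `0` is not a product of atoms
    obtain ⟨m, hm, h0⟩ := hgood 0 hs not_isUnit_zero
    exact (hm 0 (Multiset.prod_eq_zero_iff.1 h0)).1.ne_zero rfl
  refine ⟨hA, fun y _ _ s t hs ht hsy hty => ?_⟩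
  obtain ⟨w, x, hw, hx, h, hc⟩ := exists_balanced_tame_prod hA hS0 hsat hgood hloc.1 s hs
  obtain ⟨w', x', hw', hx', h', hc'⟩ := exists_balanced_tame_prod hA hS0 hsat hgood hloc.1 t ht
  rw [hsy] at h
  rw [hty] at h'
  have key := card_modEq_of_tame (IsLocalization.injective (Localization S) hS0) hloc
    (x + w') (x' + w)
    (fun b hb => (Multiset.mem_add.1 hb).elim (hx b) (fun h => .inl (hw' b h)))
    (fun b hb => (Multiset.mem_add.1 hb).elim (hx' b) (fun h => .inl (hw b h))) (by
      -- both sides are associated to `y * w.prod * w'.prod`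
      rw [Multiset.prod_add, Multiset.prod_add]
      refine (h.symm.mul_right _).trans (Associated.trans (.of_eq ?_) (h'.mul_right _))
      ring)
  rw [Multiset.card_add, Multiset.card_add] at key
  have e1 := hc.add_right (Multiset.card w')
  have e2 := hc'.add_right (Multiset.card w)
  have e3 := (e1.trans key).trans e2.symm
  refine Nat.ModEq.add_right_cancel' (Multiset.card w + Multiset.card w') ?_
  convert e3 using 1 <;> ring
end

section
/- Let r > 1 be an integer and D an r-congruence half-factorial domain such that the polynomial ring D[X] is atomic and every atom of D is an r-good atom of D[X]. Then D[X] is an r-congruence half-factorial domain. -/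
open Polynomial UniqueFactorizationMonoid

/-! ### Products of atoms up to units -/

section General

variable {A : Type*} [CommRing A]

/-- A unit can be absorbed into one of the factors of a nonempty product of atoms. -/
lemma exists_absorb_unit {s : Multiset A} {y : A} (hs : s ≠ 0) (hi : ∀ a ∈ s, Irreducible a)
    (h : Associated s.prod y) :
    ∃ s' : Multiset A, s'.prod = y ∧ (∀ a ∈ s', Irreducible a) ∧
      Multiset.card s' = Multiset.card s ∧ s'.map Associates.mk = s.map Associates.mk := by
  obtain ⟨a, s₁, rfl⟩ : ∃ a s₁, s = a ::ₘ s₁ := by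
    obtain ⟨a, ha⟩ := Multiset.exists_mem_of_ne_zero hs
    exact ⟨a, Multiset.exists_cons_of_mem ha⟩
  obtain ⟨w, rfl⟩ := h
  have haw : Associated (a * w) a := (associated_mul_unit_left a _ w.isUnit)
  refine ⟨(a * w) ::ₘ s₁, ?_, ?_, ?_, ?_⟩
  · simp only [Multiset.prod_cons]; ring
  · intro b hb
    rcases Multiset.mem_cons.1 hb with rfl | hb
    · exact haw.symm.irreducible (hi a (Multiset.mem_cons_self _ _))
    · exact hi b (Multiset.mem_cons_of_mem hb)
  · simp
  · simp only [Multiset.map_cons]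
    rw [Associates.mk_eq_mk_iff_associated.2 haw]

lemma eq_zero_of_prod_isUnit {s : Multiset A} (hi : ∀ a ∈ s, Irreducible a)
    (h : IsUnit s.prod) : s = 0 := by
  by_contra hs
  obtain ⟨a, ha⟩ := Multiset.exists_mem_of_ne_zero hs
  exact (hi a ha).not_isUnit (isUnit_of_dvd_unit (Multiset.dvd_prod ha) h)

lemma prod_ne_zero_of_irreducible [IsDomain A] {s : Multiset A}
    (hi : ∀ a ∈ s, Irreducible a) : s.prod ≠ 0 :=
  Multiset.prod_ne_zero fun h => (hi 0 h).ne_zero rfl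

lemma IsAtomicDomain.exists_associated (hA : IsAtomicDomain A) {x : A} (hx : x ≠ 0) :
    ∃ s : Multiset A, (∀ a ∈ s, Irreducible a) ∧ Associated s.prod x := by
  by_cases hu : IsUnit x
  · exact ⟨0, by simp, by simpa using (associated_one_iff_isUnit.2 hu).symm⟩
  · obtain ⟨s, hs, h⟩ := hA x hx hu
    exact ⟨s, hs, by rw [h]⟩

lemma IsRCHFD.card_modEq_of_associated [IsDomain A] {r : ℕ} (hA : IsRCHFD A r) {s t : Multiset A}
    (hs : ∀ a ∈ s, Irreducible a) (ht : ∀ a ∈ t, Irreducible a)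
    (h : Associated s.prod t.prod) : Multiset.card s ≡ Multiset.card t [MOD r] := by
  by_cases hu : IsUnit t.prod
  · rw [eq_zero_of_prod_isUnit hs (h.symm.isUnit hu), eq_zero_of_prod_isUnit ht hu]
  · have hs0 : s ≠ 0 := by
      rintro rfl
      exact hu (h.isUnit (by simp))
    obtain ⟨s', hp, hi, hc, -⟩ := exists_absorb_unit hs0 hs h
    rw [← hc]
    exact hA.2 _ (prod_ne_zero_of_irreducible ht) hu s' t hi ht hp rfl

/-- Splitting a redundant `r`-unbalanced equality of products of atoms leaves at least one
`r`-unbalanced part, so repeated splitting ends in an irredundant `r`-unbalanced equality. Its left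
side consists, up to associates, of factors of the original left side. -/
lemma exists_irredundant_piece [IsDomain A] {r : ℕ} (n : ℕ) :
    ∀ s t : Multiset A, Multiset.card s ≤ n → (∀ a ∈ s, Irreducible a) →
      (∀ a ∈ t, Irreducible a) → Associated s.prod t.prod →
      ¬ (Multiset.card s ≡ Multiset.card t [MOD r]) →
      ∃ u v : Multiset A, IsAtomicEquality u v ∧ IsIrredundant u v ∧
        ¬ (Multiset.card u ≡ Multiset.card v [MOD r]) ∧
        u.map Associates.mk ≤ s.map Associates.mk := by
  induction n with
  | zero =>
    intro s t hn hs ht h hb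
    obtain rfl : s = 0 := by simpa using hn
    have : t = 0 := eq_zero_of_prod_isUnit ht (h.isUnit (by simp))
    subst this
    exact absurd rfl hb
  | succ n ih =>
    intro s t hn hs ht h hb
    have hs0 : s ≠ 0 := by
      rintro rfl
      have : t = 0 := eq_zero_of_prod_isUnit ht (h.isUnit (by simp))
      subst this
      exact hb rfl
    have ht0 : t ≠ 0 := by
      rintro rfl
      have : s = 0 := eq_zero_of_prod_isUnit hs (h.symm.isUnit (by simp))
      exact hs0 this
    obtain ⟨s', hp, hi, hc, hm⟩ := exists_absorb_unit hs0 hs h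
    have hs'0 : s' ≠ 0 := by
      rintro rfl
      exact hs0 (by simpa using hc.symm)
    rw [← hc] at hn hb
    rw [← hm]
    clear hm hc hs hs0 h
    by_cases hirr : IsIrredundant s' t
    · exact ⟨s', t, ⟨hs'0, ht0, hi, ht, hp⟩, hirr, hb, le_rfl⟩
    · simp only [IsIrredundant, not_forall, not_not] at hirr
      obtain ⟨u, v, hu, hv, hu0, hv0, hus, hvt, huv⟩ := hirr
      obtain ⟨u₂, rfl⟩ := Multiset.le_iff_exists_add.1 hu
      obtain ⟨v₂, rfl⟩ := Multiset.le_iff_exists_add.1 hv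
      have hiu : ∀ a ∈ u, Irreducible a := fun a ha => hi a (Multiset.mem_add.2 (.inl ha))
      have hiu₂ : ∀ a ∈ u₂, Irreducible a := fun a ha => hi a (Multiset.mem_add.2 (.inr ha))
      have hiv : ∀ a ∈ v, Irreducible a := fun a ha => ht a (Multiset.mem_add.2 (.inl ha))
      have hiv₂ : ∀ a ∈ v₂, Irreducible a := fun a ha => ht a (Multiset.mem_add.2 (.inr ha))
      have huv₂ : Associated u₂.prod v₂.prod := by
        rw [Multiset.prod_add, Multiset.prod_add] at hp
        exact Associated.of_mul_left (.of_eq hp) huv (prod_ne_zero_of_irreducible hiu)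
      have hc₁ : 0 < Multiset.card u := Multiset.card_pos.2 hu0
      have hc₂ : 0 < Multiset.card u₂ := by
        refine Multiset.card_pos.2 ?_
        rintro rfl
        simp at hus
      rw [Multiset.card_add] at hn
      by_cases hb₁ : Multiset.card u ≡ Multiset.card v [MOD r]
      · have hb₂ : ¬ (Multiset.card u₂ ≡ Multiset.card v₂ [MOD r]) := fun hb₂ =>
          hb (by simpa only [Multiset.card_add] using hb₁.add hb₂)
        obtain ⟨x, y, h₁, h₂, h₃, h₄⟩ := ih u₂ v₂ (by omega) hiu₂ hiv₂ huv₂ hb₂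
        exact ⟨x, y, h₁, h₂, h₃, h₄.trans (Multiset.map_le_map (Multiset.le_add_left _ _))⟩
      · obtain ⟨x, y, h₁, h₂, h₃, h₄⟩ := ih u v (by omega) hiu hiv huv hb₁
        exact ⟨x, y, h₁, h₂, h₃, h₄.trans (Multiset.map_le_map (Multiset.le_add_right _ _))⟩

end General

/-! ### Atoms of `D[X]` and constants -/

section Poly

variable {D : Type*} [CommRing D] [IsDomain D]

lemma irreducible_C {d : D} (hd : Irreducible d) : Irreducible (C d : D[X]) := by
  refine ⟨fun h => hd.not_isUnit (isUnit_C.1 h), fun a b hab => ?_⟩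
  have hd0 : (C d : D[X]) ≠ 0 := C_ne_zero.2 hd.ne_zero
  have hdeg : a.natDegree + b.natDegree = 0 := by
    rw [← natDegree_mul (left_ne_zero_of_mul (hab ▸ hd0)) (right_ne_zero_of_mul (hab ▸ hd0)),
      ← hab, natDegree_C]
  obtain ⟨x, rfl⟩ := natDegree_eq_zero.1 (Nat.eq_zero_of_add_eq_zero_right hdeg)
  obtain ⟨y, rfl⟩ := natDegree_eq_zero.1 (Nat.eq_zero_of_add_eq_zero_left hdeg)
  rw [← C_mul] at hab
  simpa only [isUnit_C] using hd.isUnit_or_isUnit (C_injective hab)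

lemma prod_map_C {D : Type*} [CommRing D] (s : Multiset D) :
    (s.map (C : D → D[X])).prod = C s.prod :=
  (map_multiset_prod (C : D →+* D[X]) s).symm

/-- An equality between an atom `f` times constants and a product of atoms of `D[X]` is
`r`-balanced as soon as the constant atoms are `r`-good: an irredundant `r`-unbalanced piece of
it could only be `f` equal to a product of several atoms. -/
lemma card_modEq_of_atom {r : ℕ} (hgood : ∀ d : D, Irreducible d → IsRGoodAtom r (C d))
    {f : D[X]} (hf : Irreducible f) {d : Multiset D} (hd : ∀ a ∈ d, Irreducible a)
    {t : Multiset D[X]} (ht : ∀ a ∈ t, Irreducible a)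
    (h : Associated (C d.prod * f) t.prod) :
    Multiset.card d + 1 ≡ Multiset.card t [MOD r] := by
  by_contra hb
  obtain ⟨u, v, hE, hI, hb', hle⟩ := exists_irredundant_piece (r := r) _ (f ::ₘ d.map C) t le_rfl
    (by
      intro a ha
      rcases Multiset.mem_cons.1 ha with rfl | ha
      · exact hf
      · obtain ⟨b, hb, rfl⟩ := Multiset.mem_map.1 ha
        exact irreducible_C (hd b hb))
    ht (by rwa [Multiset.prod_cons, prod_map_C, mul_comm]) (by simpa using hb)
  obtain ⟨hu0, hv0, hui, hvi, huv⟩ := hE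
  have hdisj : ∀ x ∈ u, Associates.mk x ∉ (d.map (C : D → D[X])).map Associates.mk := by
    intro x hx hmem
    rw [Multiset.map_map, Multiset.mem_map] at hmem
    obtain ⟨a, ha, hax⟩ := hmem
    obtain ⟨w, hw⟩ := Associates.mk_eq_mk_iff_associated.1 hax
    obtain ⟨e, he, hew⟩ := Polynomial.isUnit_iff.1 w.isUnit
    rw [← hew, ← C_mul] at hw
    have hae : Irreducible (a * e) := by
      rw [irreducible_mul_isUnit he]
      exact hd a ha
    exact (hgood _ hae).2 ⟨irreducible_C hae, u, v, ⟨hu0, hv0, hui, hvi, huv⟩, hI, hb',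
      .inl (hw ▸ hx)⟩
  have hle' : u.map Associates.mk ≤ {Associates.mk f} := by
    classical
    rw [Multiset.le_iff_count]
    intro y
    by_cases hy : y ∈ u.map Associates.mk
    · have h1 := Multiset.le_iff_count.1 hle y
      obtain ⟨x, hx, rfl⟩ := Multiset.mem_map.1 hy
      rw [Multiset.map_cons, ← Multiset.singleton_add, Multiset.count_add,
        Multiset.count_eq_zero.2 (hdisj x hx)] at h1
      exact h1
    · simp [Multiset.count_eq_zero.2 hy]
  have hcu : Multiset.card u = 1 := by
    have h1 := Multiset.card_le_card hle'
    have h2 := Multiset.card_pos.2 hu0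
    simp only [Multiset.card_map, Multiset.card_singleton] at h1
    omega
  obtain ⟨g, rfl⟩ := Multiset.card_eq_one.1 hcu
  have hg : Irreducible g := hui g (by simp)
  obtain ⟨p, v', rfl⟩ : ∃ p v', v = p ::ₘ v' := by
    obtain ⟨p, hp⟩ := Multiset.exists_mem_of_ne_zero hv0
    exact ⟨p, Multiset.exists_cons_of_mem hp⟩
  rw [Multiset.prod_singleton, Multiset.prod_cons] at huv
  have hv' : v' = 0 := by
    rcases hg.isUnit_or_isUnit huv with hp | hp
    · exact absurd hp (hvi p (by simp)).not_isUnit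
    · exact eq_zero_of_prod_isUnit (fun a ha => hvi a (Multiset.mem_cons_of_mem ha)) hp
  subst hv'
  exact hb' rfl

/-! ### Comparison with the polynomial ring over the fraction field -/

/-- Two polynomials over `D` that are associated over the fraction field agree up to constant
factors from `D`. -/
lemma exists_C_mul_eq {g h : D[X]}
    (H : Associated (g.map (algebraMap D (FractionRing D)))
      (h.map (algebraMap D (FractionRing D)))) :
    ∃ c d : D, c ≠ 0 ∧ d ≠ 0 ∧ C d * g = C c * h := by
  obtain ⟨w, hw⟩ := H.symm
  obtain ⟨k, hk, hkw⟩ := Polynomial.isUnit_iff.1 w.isUnit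
  obtain ⟨c, d, hd, rfl⟩ := IsFractionRing.div_surjective (A := D) k
  have hd0 : d ≠ 0 := nonZeroDivisors.ne_zero hd
  have hd0' : algebraMap D (FractionRing D) d ≠ 0 := by simpa using hd0
  refine ⟨c, d, ?_, hd0, ?_⟩
  · rintro rfl
    simp at hk
  · apply map_injective _ (IsFractionRing.injective D (FractionRing D))
    rw [Polynomial.map_mul, Polynomial.map_mul, map_C, map_C, ← hw, ← hkw, mul_left_comm,
      ← C_mul, mul_div_cancel₀ _ hd0', mul_comm]

lemma exists_atom_associated (hatomic : IsAtomicDomain D[X]) {q : (FractionRing D)[X]}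
    (hq : Irreducible q) :
    ∃ P : D[X], Irreducible P ∧ Associated (P.map (algebraMap D (FractionRing D))) q := by
  obtain ⟨b, hbm, hb⟩ := IsLocalization.integerNormalization_spec (nonZeroDivisors D) q
  set p := IsLocalization.integerNormalization (nonZeroDivisors D) q with hp
  have hb0 : algebraMap D (FractionRing D) b ≠ 0 := by
    simpa using nonZeroDivisors.ne_zero hbm
  have hpq : Associated (p.map (algebraMap D (FractionRing D))) q := by
    rw [hb, Algebra.smul_def, Polynomial.algebraMap_apply]
    exact associated_unit_mul_left _ _ (isUnit_C.2 hb0.isUnit)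
  obtain ⟨s, hs, hsp⟩ := hatomic p
    (by
      intro h0
      rw [h0, Polynomial.map_zero] at hpq
      exact hq.ne_zero (hpq.eq_zero_iff.1 rfl))
    (fun hu => hq.not_isUnit (hpq.isUnit (hu.map (mapRingHom (algebraMap D (FractionRing D))))))
  have hdvd : q ∣ (s.map (mapRingHom (algebraMap D (FractionRing D)))).prod := by
    rw [← map_multiset_prod, hsp]
    exact hpq.symm.dvd
  obtain ⟨a, ha, hqa⟩ := hq.prime.exists_mem_multiset_map_dvd hdvd
  refine ⟨a, hs a ha, associated_of_dvd_dvd ?_ hqa⟩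
  refine dvd_trans ?_ hpq.dvd
  exact Polynomial.map_dvd _ (hsp ▸ Multiset.dvd_prod ha)

open Classical in
/-- The prime factorization of `f` over the fraction field of `D`, with each normalized prime
factor `q` replaced by the polynomial `rep q` over `D`. -/
noncomputable def repFactors (rep : (FractionRing D)[X] → D[X]) (f : D[X]) : Multiset D[X] :=
  (normalizedFactors (f.map (algebraMap D (FractionRing D)))).map rep

lemma map_fractionRing_ne_zero {D : Type*} [CommRing D] {f : D[X]} (hf : f ≠ 0) :
    f.map (algebraMap D (FractionRing D)) ≠ 0 :=
  (Polynomial.map_ne_zero_iff (IsFractionRing.injective D (FractionRing D))).2 hf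

lemma repFactors_one (rep : (FractionRing D)[X] → D[X]) : repFactors rep 1 = 0 := by
  simp [repFactors]

lemma repFactors_mul (rep : (FractionRing D)[X] → D[X]) {f g : D[X]} (hf : f ≠ 0) (hg : g ≠ 0) :
    repFactors rep (f * g) = repFactors rep f + repFactors rep g := by
  classical
  rw [repFactors, Polynomial.map_mul, normalizedFactors_mul (map_fractionRing_ne_zero hf)
    (map_fractionRing_ne_zero hg), Multiset.map_add]
  rfl

lemma irreducible_of_mem_repFactors {rep : (FractionRing D)[X] → D[X]}
    (hrep : ∀ q, Irreducible q → Irreducible (rep q) ∧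
      Associated ((rep q).map (algebraMap D (FractionRing D))) q)
    {f a : D[X]} (ha : a ∈ repFactors rep f) :
    Irreducible a := by
  classical
  obtain ⟨q, hq, rfl⟩ := Multiset.mem_map.1 ha
  exact (hrep q (irreducible_of_normalized_factor q hq)).1

lemma map_repFactors_prod {rep : (FractionRing D)[X] → D[X]}
    (hrep : ∀ q, Irreducible q → Irreducible (rep q) ∧
      Associated ((rep q).map (algebraMap D (FractionRing D))) q)
    {f : D[X]} (hf : f ≠ 0) :
    Associated ((repFactors rep f).prod.map (algebraMap D (FractionRing D)))
      (f.map (algebraMap D (FractionRing D))) := by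
  classical
  have key : ∀ m : Multiset (FractionRing D)[X], (∀ q ∈ m, Irreducible q) →
      Associated ((m.map rep).prod.map (algebraMap D (FractionRing D))) m.prod := by
    intro m
    induction m using Multiset.induction_on with
    | empty => simp
    | cons q m ih =>
      intro hm
      rw [Multiset.map_cons, Multiset.prod_cons, Multiset.prod_cons, Polynomial.map_mul]
      exact (hrep q (hm q (by simp))).2.mul_mul
        (ih fun x hx => hm x (Multiset.mem_cons_of_mem hx))
  exact (key _ fun q hq => irreducible_of_normalized_factor q hq).trans
    (prod_normalizedFactors (map_fractionRing_ne_zero hf))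

/-- A product of atoms of `D[X]` and the product of its representative factors become associated
after multiplication by atoms of `D`, in such a way that both sides have congruent lengths. -/
lemma exists_balanced {rep : (FractionRing D)[X] → D[X]}
    (hrep : ∀ q, Irreducible q → Irreducible (rep q) ∧
      Associated ((rep q).map (algebraMap D (FractionRing D))) q)
    {r : ℕ} (hD : IsAtomicDomain D)
    (hgood : ∀ d : D, Irreducible d → IsRGoodAtom r (C d)) (s : Multiset D[X]) :
    (∀ a ∈ s, Irreducible a) → ∃ c d : Multiset D, (∀ a ∈ c, Irreducible a) ∧
      (∀ a ∈ d, Irreducible a) ∧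
      Associated (C d.prod * s.prod) (C c.prod * (repFactors rep s.prod).prod) ∧
      Multiset.card d + Multiset.card s ≡
        Multiset.card c + Multiset.card (repFactors rep s.prod) [MOD r] := by
  induction s using Multiset.induction_on with
  | empty =>
    intro _
    refine ⟨0, 0, by simp, by simp, ?_, ?_⟩
    · simp [repFactors_one]
    · simp [repFactors_one, Nat.ModEq]
  | cons f s ih =>
    intro hs
    have hs' : ∀ a ∈ s, Irreducible a := fun a ha => hs a (Multiset.mem_cons_of_mem ha)
    have hf : Irreducible f := hs f (by simp)
    obtain ⟨c, d, hc, hd, hcd, hcard⟩ := ih hs'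
    obtain ⟨c₀, d₀, hc₀, hd₀, h₀⟩ := exists_C_mul_eq (map_repFactors_prod hrep hf.ne_zero).symm
    obtain ⟨c₁, hc₁, hcc⟩ := hD.exists_associated hc₀
    obtain ⟨d₁, hd₁, hdd⟩ := hD.exists_associated hd₀
    have hA : Associated (C d₁.prod * f) (C c₁.prod * (repFactors rep f).prod) :=
      ((hdd.map C).mul_right f).trans
        ((Associated.of_eq h₀).trans ((hcc.map C).symm.mul_right _))
    have hB : Multiset.card d₁ + 1 ≡
        Multiset.card c₁ + Multiset.card (repFactors rep f) [MOD r] := by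
      have := card_modEq_of_atom hgood hf hd₁ (t := c₁.map C + repFactors rep f)
        (by
          intro a ha
          rcases Multiset.mem_add.1 ha with ha | ha
          · obtain ⟨b, hb, rfl⟩ := Multiset.mem_map.1 ha
            exact irreducible_C (hc₁ b hb)
          · exact irreducible_of_mem_repFactors hrep ha)
        (by rwa [Multiset.prod_add, prod_map_C])
      simpa using this
    refine ⟨c₁ + c, d₁ + d, ?_, ?_, ?_, ?_⟩
    · intro a ha
      exact (Multiset.mem_add.1 ha).elim (hc₁ a) (hc a)
    · intro a ha
      exact (Multiset.mem_add.1 ha).elim (hd₁ a) (hd a)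
    · rw [Multiset.prod_cons, repFactors_mul _ hf.ne_zero (prod_ne_zero_of_irreducible hs')]
      simp only [Multiset.prod_add, C_mul]
      exact ((Associated.of_eq (by ring)).trans (hA.mul_mul hcd)).trans (.of_eq (by ring))
    · rw [Multiset.prod_cons, repFactors_mul _ hf.ne_zero (prod_ne_zero_of_irreducible hs')]
      simp only [Multiset.card_add, Multiset.card_cons]
      convert hB.add hcard using 1 <;> ring

end Poly

/-- **Corollary 14.** Let `r > 1` be an integer. If `D` is an r-CHFD such that
`D[X]` is atomic and every atom of `D` is an r-good atom of `D[X]`, then `D[X]`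
is an r-CHFD. -/
theorem stmt_17 {D : Type*} [CommRing D] [IsDomain D] (r : ℕ) (hr : 1 < r)
    (hD : IsRCHFD D r)
    (hatomic : IsAtomicDomain (Polynomial D))
    (hgood : ∀ d : D, Irreducible d → IsRGoodAtom r (Polynomial.C d)) :
    IsRCHFD (Polynomial D) r := by
  refine ⟨hatomic, fun x hx _ s t hs ht hsx htx => ?_⟩
  have hex : ∀ q : (FractionRing D)[X], ∃ P : D[X], Irreducible q → Irreducible P ∧
      Associated (P.map (algebraMap D (FractionRing D))) q := by
    intro q
    by_cases hq : Irreducible q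
    · obtain ⟨P, hP⟩ := exists_atom_associated hatomic hq
      exact ⟨P, fun _ => hP⟩
    · exact ⟨0, fun h => absurd h hq⟩
  choose rep hrep using hex
  obtain ⟨c, d, hc, hd, hcd, hcard⟩ := exists_balanced hrep hD.1 hgood s hs
  obtain ⟨c', d', hc', hd', hcd', hcard'⟩ := exists_balanced hrep hD.1 hgood t ht
  rw [hsx] at hcd hcard
  rw [htx] at hcd' hcard'
  have hQ : (repFactors rep x).prod ≠ 0 :=
    prod_ne_zero_of_irreducible fun a ha => irreducible_of_mem_repFactors hrep ha
  -- Cross-multiplying cancels both `x` and its representative factors.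
  have hassoc : Associated (d + c').prod (d' + c).prod := by
    have h1 : Associated (C (d + c').prod * (x * (repFactors rep x).prod))
        (C (d' + c).prod * (x * (repFactors rep x).prod)) := by
      simp only [Multiset.prod_add, C_mul]
      exact ((Associated.of_eq (by ring)).trans (hcd.mul_mul hcd'.symm)).trans (.of_eq (by ring))
    have h2 := Associated.of_mul_right h1 (.refl _) (mul_ne_zero hx hQ)
    obtain ⟨w, hw⟩ := h2
    obtain ⟨e, he, hew⟩ := Polynomial.isUnit_iff.1 w.isUnit
    rw [← hew, ← C_mul] at hw
    exact ⟨he.unit, C_injective hw⟩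
  have h := hD.card_modEq_of_associated
    (fun a ha => (Multiset.mem_add.1 ha).elim (hd a) (hc' a))
    (fun a ha => (Multiset.mem_add.1 ha).elim (hd' a) (hc a)) hassoc
  simp only [Multiset.card_add] at h
  simp only [← ZMod.natCast_eq_natCast_iff] at h hcard hcard' ⊢
  push_cast at h hcard hcard' ⊢
  linear_combination hcard - hcard' - h
end

section
/- In the ring ℤ[√−14], the elements 3, 5+2√−14, and 5−2√−14 are atoms, the equality 3·3·3·3 = (5+2√−14)·(5−2√−14) is an irredundant unbalanced atomic equality, and consequently 3, 5+2√−14, and 5−2√−14 are bad atoms of ℤ[√−14]. -/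
/-- The norm form `x² + 14y²` takes neither of the values `3` and `27`. -/
lemma norm_ne (a : ℤ√(-14)) : a.norm ≠ 3 ∧ a.norm ≠ 27 := by
  rw [Zsqrtd.norm_def]
  generalize a.re = x
  generalize a.im = y
  constructor <;> intro h
  all_goals
    have hx : x ≤ 5 := by nlinarith [sq_nonneg y]
    have hx' : -5 ≤ x := by nlinarith [sq_nonneg y]
    have hy : y ≤ 1 := by nlinarith
    have hy' : -1 ≤ y := by nlinarith
    interval_cases x <;> interval_cases y <;> omega

lemma eq_of_norm_eq_nine {a : ℤ√(-14)} (h : a.norm = 9) : a = 3 ∨ a = -3 := by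
  rw [Zsqrtd.norm_def] at h
  obtain ⟨x, y⟩ := a
  dsimp only at h
  have hy : y = 0 := by
    have h1 : y < 1 := by nlinarith
    have h2 : -1 < y := by nlinarith
    omega
  subst hy
  have hx : (x - 3) * (x + 3) = 0 := by linarith
  rcases mul_eq_zero.mp hx with hx | hx
  · left
    ext
    · simpa using by omega
    · simp
  · right
    ext
    · simpa using by omega
    · simp

lemma isUnit_of_norm_eq_one {a : ℤ√(-14)} (h : a.norm = 1) : IsUnit a :=
  (Zsqrtd.norm_eq_one_iff' (by norm_num) a).mp h

/-- An element whose norm is a nontrivial divisor of `81` is an atom unless it is `±9`: since `3`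
and `27` are not norms, a nontrivial factorization has two factors of norm `9`. -/
lemma irreducible_of_norm_dvd {z : ℤ√(-14)} (h81 : z.norm ∣ 81) (h1 : z.norm ≠ 1)
    (h9 : z ≠ 9) (h9' : z ≠ -9) : Irreducible z := by
  refine ⟨fun hu => h1 ((Zsqrtd.norm_eq_one_iff' (by norm_num) z).mpr hu), fun {a b} hab => ?_⟩
  have hn : ∀ c : ℤ√(-14), c.norm ∣ z.norm →
      c.norm = 1 ∨ c.norm = 9 ∨ c.norm = 81 := by
    intro c hc
    have hd : c.norm ∣ 81 := hc.trans h81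
    have h0 : 0 ≤ c.norm := Zsqrtd.norm_nonneg (by norm_num) c
    have hle : c.norm ≤ 81 := Int.le_of_dvd (by norm_num) hd
    obtain ⟨h3, h27⟩ := norm_ne c
    generalize c.norm = n at *
    interval_cases n <;> omega
  have hm : z.norm = a.norm * b.norm := by rw [hab, Zsqrtd.norm_mul]
  have hle : a.norm * b.norm ≤ 81 := hm ▸ Int.le_of_dvd (by norm_num) h81
  rcases hn a (hm ▸ dvd_mul_right _ _) with ha | ha | ha
  · exact Or.inl (isUnit_of_norm_eq_one ha)
  all_goals
    rcases hn b (hm ▸ dvd_mul_left _ _) with hb | hb | hb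
    · exact Or.inr (isUnit_of_norm_eq_one hb)
    all_goals try (rw [ha, hb] at hle; omega)
  -- Both factors have norm `9`, so they are `±3` and `z = ±9`.
  exfalso
  rcases eq_of_norm_eq_nine ha with rfl | rfl <;> rcases eq_of_norm_eq_nine hb with rfl | rfl
  · exact h9 (by rw [hab]; norm_num)
  · exact h9' (by rw [hab]; norm_num)
  · exact h9' (by rw [hab]; norm_num)
  · exact h9 (by rw [hab]; norm_num)

lemma irreducible_three : Irreducible (3 : ℤ√(-14)) := by
  apply irreducible_of_norm_dvd <;> decide

lemma irreducible_five_add : Irreducible (⟨5, 2⟩ : ℤ√(-14)) := by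
  apply irreducible_of_norm_dvd <;> decide

lemma irreducible_five_sub : Irreducible (⟨5, -2⟩ : ℤ√(-14)) := by
  apply irreducible_of_norm_dvd <;> decide

lemma not_three_dvd (y : ℤ) : ¬ (3 : ℤ√(-14)) ∣ ⟨5, y⟩ := by
  intro h
  have h' := ((Zsqrtd.intCast_dvd 3 (⟨5, y⟩ : ℤ√(-14))).mp (by exact_mod_cast h)).1
  revert h'
  norm_num

lemma isIrredundant_three_pow_four :
    IsIrredundant ({3, 3, 3, 3} : Multiset (ℤ√(-14)))
      ({⟨5, 2⟩, ⟨5, -2⟩} : Multiset (ℤ√(-14))) := by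
  intro u v hu hv hu0 hv0 _ hvt h
  obtain ⟨c, hc⟩ := Multiset.exists_mem_of_ne_zero hu0
  have hc3 : c = 3 := by simpa using Multiset.mem_of_le hu hc
  have hdvd : (3 : ℤ√(-14)) ∣ v.prod := (hc3 ▸ Multiset.dvd_prod hc).trans h.dvd
  have hlt : Multiset.card v < 2 := by
    simpa using Multiset.card_lt_card (lt_of_le_of_ne hv hvt)
  have hpos : 0 < Multiset.card v := Multiset.card_pos.mpr hv0
  obtain ⟨d, rfl⟩ := Multiset.card_eq_one.mp (show Multiset.card v = 1 by omega)
  rw [Multiset.prod_singleton] at hdvd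
  have hd : d = ⟨5, 2⟩ ∨ d = ⟨5, -2⟩ := by
    simpa using Multiset.mem_of_le hv (Multiset.mem_singleton_self d)
  rcases hd with rfl | rfl
  · exact not_three_dvd _ hdvd
  · exact not_three_dvd _ hdvd

lemma three_pow_four_eq :
    (3 * 3 * 3 * 3 : ℤ√(-14)) = (⟨5, 2⟩ : ℤ√(-14)) * ⟨5, -2⟩ := by
  decide

lemma isAtomicEquality_three_pow_four :
    IsAtomicEquality ({3, 3, 3, 3} : Multiset (ℤ√(-14)))
      ({⟨5, 2⟩, ⟨5, -2⟩} : Multiset (ℤ√(-14))) := by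
  refine ⟨by simp, by simp, ?_, ?_, ?_⟩
  · intro a ha
    have : a = 3 := by simpa using ha
    exact this ▸ irreducible_three
  · intro b hb
    have : b = ⟨5, 2⟩ ∨ b = ⟨5, -2⟩ := by simpa using hb
    rcases this with rfl | rfl
    · exact irreducible_five_add
    · exact irreducible_five_sub
  · simpa [mul_assoc] using three_pow_four_eq

/-- **Remark 5(iii).** In `ℤ[√−14]`, the elements `3`, `5 + 2√−14` and
`5 − 2√−14` are atoms, the equality `3·3·3·3 = (5 + 2√−14)·(5 − 2√−14)` is an
irredundant unbalanced atomic equality, and consequently all three elements are bad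
atoms of `ℤ[√−14]`. -/
theorem stmt_18 :
    Irreducible (3 : ℤ√(-14)) ∧
    Irreducible (⟨5, 2⟩ : ℤ√(-14)) ∧
    Irreducible (⟨5, -2⟩ : ℤ√(-14)) ∧
    (3 * 3 * 3 * 3 : ℤ√(-14)) = (⟨5, 2⟩ : ℤ√(-14)) * ⟨5, -2⟩ ∧
    IsAtomicEquality ({3, 3, 3, 3} : Multiset (ℤ√(-14)))
      ({⟨5, 2⟩, ⟨5, -2⟩} : Multiset (ℤ√(-14))) ∧
    IsIrredundant ({3, 3, 3, 3} : Multiset (ℤ√(-14)))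
      ({⟨5, 2⟩, ⟨5, -2⟩} : Multiset (ℤ√(-14))) ∧
    Multiset.card ({3, 3, 3, 3} : Multiset (ℤ√(-14))) ≠
      Multiset.card ({⟨5, 2⟩, ⟨5, -2⟩} : Multiset (ℤ√(-14))) ∧
    IsBadAtom (3 : ℤ√(-14)) ∧
    IsBadAtom (⟨5, 2⟩ : ℤ√(-14)) ∧
    IsBadAtom (⟨5, -2⟩ : ℤ√(-14)) := by
  have hcard : Multiset.card ({3, 3, 3, 3} : Multiset (ℤ√(-14))) ≠
      Multiset.card ({⟨5, 2⟩, ⟨5, -2⟩} : Multiset (ℤ√(-14))) := by simp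
  have hE := isAtomicEquality_three_pow_four
  have hI := isIrredundant_three_pow_four
  exact ⟨irreducible_three, irreducible_five_add, irreducible_five_sub, three_pow_four_eq,
    hE, hI, hcard,
    ⟨irreducible_three, _, _, hE, hI, hcard, Or.inl (by simp)⟩,
    ⟨irreducible_five_add, _, _, hE, hI, hcard, Or.inr (by simp)⟩,
    ⟨irreducible_five_sub, _, _, hE, hI, hcard, Or.inr (by simp)⟩⟩
end

section
/- In the polynomial ring ℤ[√−3][X], the elements 2, X²+X+1, 2X+1+√−3, and 2X+1−√−3 are atoms, the equality 2·2·(X²+X+1) = (2X+1+√−3)·(2X+1−√−3) is an irredundant unbalanced atomic equality, and consequently 2 is a bad atom of ℤ[√−3][X]. -/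
open Polynomial

instance : IsDomain (ℤ√(-3)) :=
  haveI : NoZeroDivisors (ℤ√(-3)) := ⟨fun {a b} h => by
    have hn : a.norm * b.norm = 0 := by rw [← Zsqrtd.norm_mul, h, Zsqrtd.norm_zero]
    rcases mul_eq_zero.mp hn with h | h
    · exact Or.inl ((Zsqrtd.norm_eq_zero_iff (by norm_num) a).mp h)
    · exact Or.inr ((Zsqrtd.norm_eq_zero_iff (by norm_num) b).mp h)⟩
  NoZeroDivisors.to_isDomain _

theorem zsqrt_norm_ne_two (a : ℤ√(-3)) : a.norm ≠ 2 := by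
  rw [Zsqrtd.norm_def]
  intro h
  have h1 : a.im ^ 2 < 1 := by nlinarith [sq_nonneg a.re]
  have h2 : a.im = 0 := by
    have := abs_lt_of_sq_lt_sq (show a.im ^ 2 < 1 ^ 2 by simpa using h1) (by norm_num)
    rw [abs_lt] at this
    omega
  have h3 : a.re * a.re = 2 := by simpa [h2] using h
  have : a.re < 2 := by nlinarith
  have : -2 < a.re := by nlinarith
  interval_cases a.re <;> omega

theorem zsqrt_irreducible_two : Irreducible (2 : ℤ√(-3)) := by
  have hunit (a : ℤ√(-3)) : a.norm = 1 ↔ IsUnit a := Zsqrtd.norm_eq_one_iff' (by norm_num) a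
  have h2 : (2 : ℤ√(-3)).norm = 4 := by decide
  refine ⟨fun h => ?_, fun a b h => ?_⟩
  · rw [← hunit, h2] at h
    omega
  · rw [← hunit, ← hunit]
    have hn : a.norm * b.norm = 4 := by rw [← Zsqrtd.norm_mul, ← h, h2]
    have ha := Zsqrtd.norm_nonneg (by norm_num) a
    have hb := Zsqrtd.norm_nonneg (by norm_num) b
    have ha2 := zsqrt_norm_ne_two a
    generalize a.norm = m at *
    generalize b.norm = n at *
    have : m ≤ 4 := Int.le_of_dvd (by norm_num) ⟨n, hn.symm⟩
    interval_cases m <;> omega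

theorem zsqrt_isRelPrime {b : ℤ√(-3)} (hb : ¬ 2 ∣ b.im) : IsRelPrime (2 : ℤ√(-3)) b := by
  refine (zsqrt_irreducible_two.isRelPrime_iff_not_dvd).mpr ?_
  rintro ⟨c, rfl⟩
  exact hb ⟨c.im, by simp⟩

theorem irreducible_C_two : Irreducible (C (2 : ℤ√(-3))) := by
  have hR := zsqrt_irreducible_two
  refine ⟨fun h => hR.not_isUnit (isUnit_C.mp h), fun f g h => ?_⟩
  have hfg : natDegree f + natDegree g = 0 := by
    have h0 : f * g ≠ 0 := h ▸ C_ne_zero.mpr hR.ne_zero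
    rw [← natDegree_mul (left_ne_zero_of_mul h0) (right_ne_zero_of_mul h0), ← h, natDegree_C]
  rw [eq_C_of_natDegree_eq_zero (p := f) (by omega),
    eq_C_of_natDegree_eq_zero (p := g) (by omega), ← C_mul] at h
  rw [eq_C_of_natDegree_eq_zero (p := f) (by omega),
    eq_C_of_natDegree_eq_zero (p := g) (by omega), isUnit_C, isUnit_C]
  exact hR.isUnit_or_isUnit (C_injective h)

theorem quadratic_natDegree : ((X : (ℤ√(-3))[X]) ^ 2 + X + 1).natDegree = 2 := by
  compute_degree!

theorem quadratic_irreducible : Irreducible ((X : (ℤ√(-3))[X]) ^ 2 + X + 1) := by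
  have hm : ((X : (ℤ√(-3))[X]) ^ 2 + X + 1).Monic := by monicity!
  rw [hm.irreducible_iff_roots_eq_zero_of_degree_le_three
    (by rw [quadratic_natDegree]) (by rw [quadratic_natDegree]; norm_num)]
  refine Multiset.eq_zero_of_forall_notMem fun a ha => ?_
  have h : a * a + a + 1 = 0 := by
    have := (mem_roots'.mp ha).2
    simpa [IsRoot, pow_two] using this
  have hre := congrArg Zsqrtd.re h
  have him := congrArg Zsqrtd.im h
  simp at hre him
  -- The imaginary part `y * (2 * x + 1)` of the equation vanishes only if `y = 0`,
  -- and `x² + x + 1` has no integer root.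
  have hy : a.im * (2 * a.re + 1) = 0 := by linarith
  rcases mul_eq_zero.mp hy with h0 | h0
  · rw [h0] at hre
    nlinarith [sq_nonneg (2 * a.re + 1)]
  · omega

theorem linear_irreducible {b : ℤ√(-3)} (hb : ¬ 2 ∣ b.im) :
    Irreducible (C (2 : ℤ√(-3)) * X + C b) :=
  irreducible_C_mul_X_add_C zsqrt_irreducible_two.ne_zero (zsqrt_isRelPrime hb)

/-- A proper nonempty part of `{p, q}` is a single polynomial of odd degree, while every
product of members of `s` is nonzero of even degree; associated polynomials have equal degree. -/
theorem irredundant_of_parity {s : Multiset (ℤ√(-3))[X]} {p q : (ℤ√(-3))[X]}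
    (hs : ∀ f ∈ s, f ≠ 0 ∧ Even f.natDegree)
    (hp : ¬ Even p.natDegree) (hq : ¬ Even q.natDegree) : IsIrredundant s {p, q} := by
  intro u v hu hv _ hv0 _ hvt hassoc
  have hcard : Multiset.card v = 1 := by
    have h1 : Multiset.card v < 2 := by
      simpa using Multiset.card_lt_card (lt_of_le_of_ne hv hvt)
    have h2 := Multiset.card_pos.mpr hv0
    omega
  obtain ⟨f, rfl⟩ := Multiset.card_eq_one.mp hcard
  have hf : ¬ Even f.natDegree := by
    have : f ∈ ({p, q} : Multiset (ℤ√(-3))[X]) := Multiset.singleton_le.mp hv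
    simp only [Multiset.insert_eq_cons, Multiset.mem_cons, Multiset.mem_singleton] at this
    rcases this with rfl | rfl <;> assumption
  have hu' : u.prod ≠ 0 ∧ Even u.prod.natDegree := by
    refine Multiset.prod_induction (fun f : (ℤ√(-3))[X] => f ≠ 0 ∧ Even f.natDegree) u ?_ ?_
      fun f hf => hs f (Multiset.mem_of_le hu hf)
    · rintro f g ⟨hf, hf'⟩ ⟨hg, hg'⟩
      exact ⟨mul_ne_zero hf hg, by rw [natDegree_mul hf hg]; exact hf'.add hg'⟩
    · simp
  rw [Multiset.prod_singleton] at hassoc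
  exact hf (natDegree_eq_of_degree_eq (degree_eq_degree_of_associated hassoc) ▸ hu'.2)

theorem linear_natDegree (b : ℤ√(-3)) : ¬ Even (C (2 : ℤ√(-3)) * X + C b).natDegree := by
  rw [natDegree_linear zsqrt_irreducible_two.ne_zero]
  decide

open Polynomial in
/-- **Remark 5(iv).** In `ℤ[√−3][X]`, the elements `2`, `X² + X + 1`,
`2X + 1 + √−3` and `2X + 1 − √−3` are atoms, the equality
`2·2·(X² + X + 1) = (2X + 1 + √−3)·(2X + 1 − √−3)` is an irredundant unbalanced
atomic equality, and consequently `2` is a bad atom of `ℤ[√−3][X]`. -/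
theorem stmt_19 :
    Irreducible (C (2 : ℤ√(-3))) ∧
    Irreducible ((X : (ℤ√(-3))[X]) ^ 2 + X + 1) ∧
    Irreducible (C (2 : ℤ√(-3)) * X + C (⟨1, 1⟩ : ℤ√(-3))) ∧
    Irreducible (C (2 : ℤ√(-3)) * X + C (⟨1, -1⟩ : ℤ√(-3))) ∧
    C (2 : ℤ√(-3)) * C (2 : ℤ√(-3)) * ((X : (ℤ√(-3))[X]) ^ 2 + X + 1) =
      (C (2 : ℤ√(-3)) * X + C (⟨1, 1⟩ : ℤ√(-3))) *
        (C (2 : ℤ√(-3)) * X + C (⟨1, -1⟩ : ℤ√(-3))) ∧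
    IsAtomicEquality
      ({C (2 : ℤ√(-3)), C (2 : ℤ√(-3)), (X : (ℤ√(-3))[X]) ^ 2 + X + 1} :
        Multiset ((ℤ√(-3))[X]))
      ({C (2 : ℤ√(-3)) * X + C (⟨1, 1⟩ : ℤ√(-3)),
        C (2 : ℤ√(-3)) * X + C (⟨1, -1⟩ : ℤ√(-3))} : Multiset ((ℤ√(-3))[X])) ∧
    IsIrredundant
      ({C (2 : ℤ√(-3)), C (2 : ℤ√(-3)), (X : (ℤ√(-3))[X]) ^ 2 + X + 1} :
        Multiset ((ℤ√(-3))[X]))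
      ({C (2 : ℤ√(-3)) * X + C (⟨1, 1⟩ : ℤ√(-3)),
        C (2 : ℤ√(-3)) * X + C (⟨1, -1⟩ : ℤ√(-3))} : Multiset ((ℤ√(-3))[X])) ∧
    Multiset.card
      ({C (2 : ℤ√(-3)), C (2 : ℤ√(-3)), (X : (ℤ√(-3))[X]) ^ 2 + X + 1} :
        Multiset ((ℤ√(-3))[X])) ≠
      Multiset.card
        ({C (2 : ℤ√(-3)) * X + C (⟨1, 1⟩ : ℤ√(-3)),
          C (2 : ℤ√(-3)) * X + C (⟨1, -1⟩ : ℤ√(-3))} : Multiset ((ℤ√(-3))[X])) ∧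
    IsBadAtom (C (2 : ℤ√(-3))) := by
  have h2 := irreducible_C_two
  have hq := quadratic_irreducible
  have h3 : Irreducible (C (2 : ℤ√(-3)) * X + C (⟨1, 1⟩ : ℤ√(-3))) :=
    linear_irreducible (by decide)
  have h4 : Irreducible (C (2 : ℤ√(-3)) * X + C (⟨1, -1⟩ : ℤ√(-3))) :=
    linear_irreducible (by decide)
  have heq : C (2 : ℤ√(-3)) * C (2 : ℤ√(-3)) * ((X : (ℤ√(-3))[X]) ^ 2 + X + 1) =
      (C (2 : ℤ√(-3)) * X + C (⟨1, 1⟩ : ℤ√(-3))) *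
        (C (2 : ℤ√(-3)) * X + C (⟨1, -1⟩ : ℤ√(-3))) := by
    have hsum : C (⟨1, 1⟩ : ℤ√(-3)) + C (⟨1, -1⟩ : ℤ√(-3)) = C 2 := by
      rw [← C_add]; congr 1
    have hprod : C (⟨1, 1⟩ : ℤ√(-3)) * C (⟨1, -1⟩ : ℤ√(-3)) = C 2 * C 2 := by
      rw [← C_mul, ← C_mul]; congr 1
    linear_combination (-C (2 : ℤ√(-3)) * X) * hsum - hprod
  have hatom : IsAtomicEquality
      ({C (2 : ℤ√(-3)), C (2 : ℤ√(-3)), (X : (ℤ√(-3))[X]) ^ 2 + X + 1} :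
        Multiset ((ℤ√(-3))[X]))
      ({C (2 : ℤ√(-3)) * X + C (⟨1, 1⟩ : ℤ√(-3)),
        C (2 : ℤ√(-3)) * X + C (⟨1, -1⟩ : ℤ√(-3))} : Multiset ((ℤ√(-3))[X])) := by
    refine ⟨Multiset.cons_ne_zero, Multiset.cons_ne_zero, ?_, ?_, ?_⟩
    · simp only [Multiset.insert_eq_cons, Multiset.mem_cons, Multiset.mem_singleton]
      rintro a (rfl | rfl | rfl) <;> assumption
    · simp only [Multiset.insert_eq_cons, Multiset.mem_cons, Multiset.mem_singleton]
      rintro a (rfl | rfl) <;> assumption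
    · simp only [Multiset.insert_eq_cons, Multiset.prod_cons, Multiset.prod_singleton]
      rw [← mul_assoc, heq]
  have hirr : IsIrredundant
      ({C (2 : ℤ√(-3)), C (2 : ℤ√(-3)), (X : (ℤ√(-3))[X]) ^ 2 + X + 1} :
        Multiset ((ℤ√(-3))[X]))
      ({C (2 : ℤ√(-3)) * X + C (⟨1, 1⟩ : ℤ√(-3)),
        C (2 : ℤ√(-3)) * X + C (⟨1, -1⟩ : ℤ√(-3))} : Multiset ((ℤ√(-3))[X])) := by
    refine irredundant_of_parity ?_ (linear_natDegree _) (linear_natDegree _)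
    intro f hf
    refine ⟨(hatom.2.2.1 f hf).ne_zero, ?_⟩
    simp only [Multiset.insert_eq_cons, Multiset.mem_cons, Multiset.mem_singleton] at hf
    rcases hf with rfl | rfl | rfl
    · rw [natDegree_C]; decide
    · rw [natDegree_C]; decide
    · rw [quadratic_natDegree]; decide
  refine ⟨h2, hq, h3, h4, heq, hatom, hirr, by simp, h2, _, _, hatom, hirr, by simp, Or.inl ?_⟩
  exact Multiset.mem_cons_self _ _
end
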